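/- arXiv:1401.3403 — 2 statements merged into one kernel-verified Lean document; each statement's English description precedes it below -/
import Mathlib

section
/- For p, q > 1 both odd, the growth series of T'_{p,q} = ⟨x, y, z | x^p = y^q = z⟩ with respect to {x, y, z} equals C_∞(t)·C_p(t)·C_q(t) / (C_p(t) + C_q(t) − C_p(t)·C_q(t)), where C_∞(t) = (1+t)/(1−t) and C_r(t) is the growth polynomial of ℤ/r. -/
open PowerSeries

/-- The growth polynomial of the cyclic group of order `p`. -/
noncomputable def Cpol (p : ℕ) : Polynomial ℚ :=
  1 + ∑ k ∈ Finset.Ioo 0 ((p + 1) / 2), 2 * Polynomial.X ^ k +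
    (if p % 2 = 0 then Polynomial.X ^ (p / 2) else 0)

/-- Word length with respect to a (symmetrized) generating set `S`. -/
noncomputable def wordLength {G : Type*} [Group G] (S : Set G) (g : G) : ℕ :=
  sInf {n : ℕ | ∃ w : List G, w.length = n ∧ (∀ x ∈ w, x ∈ S ∨ x⁻¹ ∈ S) ∧ w.prod = g}

/-- Growth series of a group with respect to a generating set `S`. -/
noncomputable def growthSeries {G : Type*} [Group G] (S : Set G) : PowerSeries ℚ :=
  PowerSeries.mk fun n => (Set.ncard {g : G | wordLength S g = n} : ℚ)

/-- Relations of `T'_{p,q} = ⟨x, y, z | x^p = y^q = z⟩`. -/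
def torusRels (p q : ℕ) : Set (FreeGroup (Fin 3)) :=
  {FreeGroup.of 0 ^ p * (FreeGroup.of 2)⁻¹, FreeGroup.of 1 ^ q * (FreeGroup.of 2)⁻¹}

/-! ### Generating functions of length functions -/

/-- Generating function of a length function. -/
noncomputable def gs {α : Type*} (l : α → ℕ) : PowerSeries ℚ :=
  PowerSeries.mk fun n => (Set.ncard {a : α | l a = n} : ℚ)

theorem gs_equiv {α β : Type*} (e : α ≃ β) (l : α → ℕ) (l' : β → ℕ)
    (h : ∀ a, l' (e a) = l a) : gs l = gs l' := by
  ext n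
  simp only [gs, PowerSeries.coeff_mk]
  congr 1
  apply Set.ncard_congr (fun a _ => e a)
  · intro a ha
    simpa [h] using ha
  · intro a b _ _ hab
    exact e.injective hab
  · intro b hb
    exact ⟨e.symm b, by simpa [← h] using hb, by simp⟩

theorem gs_prod {α β : Type*} (l : α → ℕ) (l' : β → ℕ)
    (hf : ∀ n, {a | l a = n}.Finite) (hf' : ∀ n, {a | l' a = n}.Finite) :
    gs (fun x : α × β => l x.1 + l' x.2) = gs l * gs l' := by
  classical
  ext n
  rw [PowerSeries.coeff_mul]
  simp only [gs, PowerSeries.coeff_mk]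
  have key : {x : α × β | l x.1 + l' x.2 = n} =
      ↑((Finset.HasAntidiagonal.antidiagonal n).biUnion
        fun ij => (hf ij.1).toFinset ×ˢ (hf' ij.2).toFinset) := by
    ext ⟨a, b⟩
    simp
  rw [key, Set.ncard_coe_finset, Finset.card_biUnion]
  · push_cast
    refine Finset.sum_congr rfl fun ij _ => ?_
    rw [Finset.card_product, Set.ncard_eq_toFinset_card _ (hf _),
      Set.ncard_eq_toFinset_card _ (hf' _)]
    push_cast
    rfl
  · rintro ⟨i, j⟩ _ ⟨i', j'⟩ _ hne
    rw [Function.onFun, Finset.disjoint_left]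
    rintro ⟨a, b⟩ h1 h2
    simp at h1 h2
    exact hne (by rw [← h1.1, ← h1.2, ← h2.1, ← h2.2])

theorem gs_int : (1 - PowerSeries.X) * gs Int.natAbs = 1 + PowerSeries.X := by
  have h0 : ∀ n : ℕ, Set.ncard {a : ℤ | a.natAbs = n} = if n = 0 then 1 else 2 := by
    intro n
    split_ifs with h
    · subst h
      simp
    · have : {a : ℤ | a.natAbs = n} = {(n : ℤ), -(n : ℤ)} := by
        ext a
        simp only [Set.mem_ofPred_eq, Set.mem_insert_iff, Set.mem_singleton_iff]
        omega
      rw [this, Set.ncard_pair]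
      omega
  ext n
  rw [sub_mul, one_mul, map_sub, map_add]
  rcases n with _ | n
  · simp [gs, h0]
  · rw [PowerSeries.coeff_succ_X_mul]
    simp only [gs, PowerSeries.coeff_mk, h0, PowerSeries.coeff_one, PowerSeries.coeff_X]
    rcases n with _ | n <;> norm_num

theorem gs_zmod (p : ℕ) [NeZero p] (hp : Odd p) :
    gs (fun a : ZMod p => a.valMinAbs.natAbs) = (Cpol p : PowerSeries ℚ) := by
  obtain ⟨m, hm⟩ := hp
  have h0 : ∀ n : ℕ, Set.ncard {a : ZMod p | a.valMinAbs.natAbs = n} =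
      if n = 0 then 1 else if n ≤ m then 2 else 0 := by
    intro n
    have hle := fun a : ZMod p => a.natAbs_valMinAbs_le
    split_ifs with h h'
    · subst h
      simp
    · have : {a : ZMod p | a.valMinAbs.natAbs = n} = {((n : ℤ) : ZMod p), ((-n : ℤ) : ZMod p)} := by
        ext a
        simp only [Set.mem_ofPred_eq, Set.mem_insert_iff, Set.mem_singleton_iff]
        have h1 : a = ((n : ℤ) : ZMod p) ↔ a.valMinAbs = n := by
          rw [ZMod.valMinAbs_spec]
          simp only [Set.mem_Ioc]
          constructor
          · intro h; exact ⟨h, by omega, by omega⟩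
          · exact fun h => h.1
        have h2 : a = ((-n : ℤ) : ZMod p) ↔ a.valMinAbs = -n := by
          rw [ZMod.valMinAbs_spec]
          simp only [Set.mem_Ioc]
          constructor
          · intro h; exact ⟨h, by omega, by omega⟩
          · exact fun h => h.1
        rw [h1, h2]
        omega
      rw [this, Set.ncard_pair]
      intro he
      have h1 : ((n : ℤ) : ZMod p).valMinAbs = n := by
        rw [ZMod.valMinAbs_spec]
        exact ⟨rfl, by omega, by omega⟩
      have h2 : ((n : ℤ) : ZMod p).valMinAbs = -n := by
        rw [ZMod.valMinAbs_spec]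
        exact ⟨he, by omega, by omega⟩
      omega
    · rw [Set.ncard_eq_zero]
      ext a
      simp only [Set.mem_ofPred_eq, Set.mem_empty_iff_false, iff_false]
      have := hle a
      omega
  ext n
  rw [Polynomial.coeff_coe, Cpol]
  have e1 : ¬ (p % 2 = 0) := by omega
  have e2 : (p + 1) / 2 = m + 1 := by omega
  rw [if_neg e1, e2, add_zero]
  simp only [gs, PowerSeries.coeff_mk, h0, Polynomial.coeff_add, Polynomial.coeff_one,
    Polynomial.finsetSum_coeff]
  have e3 : ∀ k : ℕ, (2 * Polynomial.X ^ k : Polynomial ℚ).coeff n = if n = k then 2 else 0 := by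
    intro k
    rw [show (2 : Polynomial ℚ) = Polynomial.C 2 from rfl, Polynomial.coeff_C_mul_X_pow]
  simp only [e3, Finset.sum_ite_eq, Finset.mem_Ioo]
  rcases n with _ | n
  · simp
  · by_cases h : n + 1 ≤ m
    · have : n < m := h
      simp [this]
    · have : ¬ n < m := h
      simp [this]

/-! ### Reduced words -/

open Monoid.CoprodI

/-- The cyclic factors. -/
abbrev MM (c : Bool → ℕ) (i : Bool) := Multiplicative (ZMod (c i))

/-- Balanced exponent. -/
def vexp {c : Bool → ℕ} {i : Bool} (a : MM c i) : ℤ := ZMod.valMinAbs (Multiplicative.toAdd a)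

theorem vexp_one {c : Bool → ℕ} {i : Bool} : vexp (1 : MM c i) = 0 := by
  simp [vexp]

theorem vexp_eq_zero {c : Bool → ℕ} {i : Bool} {a : MM c i} : vexp a = 0 ↔ a = 1 := by
  rw [vexp, ZMod.valMinAbs_eq_zero]
  rfl

/-- Length of a reduced word. -/
def wlen {c : Bool → ℕ} (w : Word (MM c)) : ℕ :=
  (w.toList.map fun s => (vexp s.2).natAbs).sum

theorem wlen_cons {c : Bool → ℕ} {i : Bool} (a : MM c i) (w : Word (MM c)) (h1 h2) :
    wlen (Word.cons a w h1 h2) = (vexp a).natAbs + wlen w := by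
  simp [wlen]

theorem wlen_rcons {c : Bool → ℕ} {i : Bool} (P : Word.Pair (MM c) i) :
    wlen (Word.rcons P) = (vexp P.head).natAbs + wlen P.tail := by
  rw [Word.rcons]
  split_ifs with h
  · simp [h, vexp_one]
  · rw [wlen_cons]

/-- Words not starting with a letter of index `i`. -/
abbrev TT (c : Bool → ℕ) (i : Bool) := {w : Word (MM c) // w.fstIdx ≠ some i}

/-- Splitting the first letter. -/
def splitW (c : Bool → ℕ) (i : Bool) : Word (MM c) ≃ ZMod (c i) × TT c i :=
  (Word.equivPair i).trans
    { toFun := fun P => (Multiplicative.toAdd P.head, ⟨P.tail, P.fstIdx_ne⟩)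
      invFun := fun x => ⟨Multiplicative.ofAdd x.1, x.2.1, x.2.2⟩
      left_inv := fun _ => rfl
      right_inv := fun _ => rfl }

theorem splitW_symm (c : Bool → ℕ) (i : Bool) (a : ZMod (c i)) (t : TT c i) :
    (splitW c i).symm (a, t) =
      Word.rcons (⟨Multiplicative.ofAdd a, t.1, t.2⟩ : Word.Pair (MM c) i) := rfl

theorem wlen_splitW_symm (c : Bool → ℕ) (i : Bool) (x : ZMod (c i) × TT c i) :
    wlen ((splitW c i).symm x) = x.1.valMinAbs.natAbs + wlen x.2.1 := by
  rcases x with ⟨a, t⟩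
  rw [splitW_symm, wlen_rcons]
  rfl

theorem wlen_finite (c : Bool → ℕ) [∀ i, NeZero (c i)] (n : ℕ) :
    {w : Word (MM c) | wlen w = n}.Finite := by
  have : ∀ i, Finite (MM c i) := fun i => inferInstanceAs (Finite (ZMod (c i)))
  have h := List.finite_length_le (Σ i, MM c i) n
  refine Set.Finite.of_finite_image (f := Word.toList) (h.subset ?_) ?_
  · rintro _ ⟨w, rfl, rfl⟩
    simp only [Set.mem_ofPred_eq, wlen]
    have := List.length_le_sum_of_one_le (w.toList.map fun s => (vexp s.2).natAbs) (by
      intro x hx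
      obtain ⟨s, hs, rfl⟩ := List.mem_map.1 hx
      have h1 := w.ne_one s hs
      have : vexp s.2 ≠ 0 := fun h => h1 (vexp_eq_zero.1 h)
      omega)
    simpa using this
  · intro a _ b _ hab
    exact Word.ext hab

theorem gs_word_split (c : Bool → ℕ) [∀ i, NeZero (c i)] (hc : ∀ i, Odd (c i)) (i : Bool) :
    gs (wlen (c := c)) = (Cpol (c i) : PowerSeries ℚ) * gs (fun t : TT c i => wlen t.1) := by
  rw [← gs_zmod (c i) (hc i), ← gs_prod]
  · symm
    exact gs_equiv (splitW c i).symm _ _ (wlen_splitW_symm c i)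
  · exact fun n => Set.toFinite _
  · intro n
    exact Set.Finite.of_finite_image (f := Subtype.val)
      ((wlen_finite c n).subset (by rintro _ ⟨t, ht, rfl⟩; exact ht))
      Subtype.val_injective.injOn

theorem gs_word_add (c : Bool → ℕ) [∀ i, NeZero (c i)] :
    gs (fun t : TT c true => wlen t.1) + gs (fun t : TT c false => wlen t.1) =
      gs (wlen (c := c)) + 1 := by
  ext n
  rw [map_add, map_add]
  simp only [gs, PowerSeries.coeff_mk, PowerSeries.coeff_one]
  have hS : ∀ i, Set.ncard {t : TT c i | wlen t.1 = n} =
      Set.ncard {w : Word (MM c) | wlen w = n ∧ w.fstIdx ≠ some i} := by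
    intro i
    rw [← Set.ncard_image_of_injective _ (Subtype.val_injective)]
    congr 1
    ext w
    simp
  rw [hS, hS]
  have hf : ∀ i, {w : Word (MM c) | wlen w = n ∧ w.fstIdx ≠ some i}.Finite :=
    fun i => (wlen_finite c n).subset fun w hw => hw.1
  have key := Set.ncard_union_add_ncard_inter _ _ (hf true) (hf false)
  have hu : {w : Word (MM c) | wlen w = n ∧ w.fstIdx ≠ some true} ∪
      {w : Word (MM c) | wlen w = n ∧ w.fstIdx ≠ some false} = {w | wlen w = n} := by
    ext w
    simp only [Set.mem_union, Set.mem_ofPred_eq]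
    rcases h : w.fstIdx with _ | _ | _ <;> simp
  have hi : {w : Word (MM c) | wlen w = n ∧ w.fstIdx ≠ some true} ∩
      {w : Word (MM c) | wlen w = n ∧ w.fstIdx ≠ some false} =
      if n = 0 then {Word.empty} else ∅ := by
    have he : wlen (Word.empty : Word (MM c)) = 0 := rfl
    ext w
    induction w using Word.consRecOn with
    | empty =>
      split_ifs with h
      · simp [he, h, Word.fstIdx]
      · simp [he, Ne.symm h]
    | cons i m w h1 h2 ih =>
      have hne : Word.cons m w h1 h2 ≠ Word.empty := by
        intro h
        have := congrArg Word.toList h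
        simp at this
      split_ifs <;> cases i <;> simp [hne]
  rw [hu, hi] at key
  rw [← Nat.cast_add, ← key]
  split_ifs <;> simp

theorem gs_word (c : Bool → ℕ) [∀ i, NeZero (c i)] (hc : ∀ i, Odd (c i)) :
    ((Cpol (c true) : PowerSeries ℚ) + (Cpol (c false) : PowerSeries ℚ) -
      (Cpol (c true) : PowerSeries ℚ) * (Cpol (c false) : PowerSeries ℚ)) * gs (wlen (c := c)) =
      (Cpol (c true) : PowerSeries ℚ) * (Cpol (c false) : PowerSeries ℚ) := by
  have h1 := gs_word_split c hc true
  have h2 := gs_word_split c hc false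
  have h3 := gs_word_add c
  linear_combination (Cpol (c true) : PowerSeries ℚ) * h2 + (Cpol (c false) : PowerSeries ℚ) * h1 +
    (Cpol (c true) : PowerSeries ℚ) * (Cpol (c false) : PowerSeries ℚ) * h3

/-! ### Normal forms and the action -/

/-- Integers as quotient and balanced remainder. -/
def eZ (c : ℕ) [NeZero c] : ℤ × ZMod c ≃ ℤ where
  toFun x := x.1 * c + x.2.valMinAbs
  invFun j := ((j - (j : ZMod c).valMinAbs) / c, (j : ZMod c))
  left_inv := by
    rintro ⟨k, a⟩
    have hc : (c : ℤ) ≠ 0 := by exact_mod_cast NeZero.ne c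
    simp [Int.mul_ediv_cancel _ hc]
  right_inv := by
    intro j
    have : (c : ℤ) ∣ j - (j : ZMod c).valMinAbs := by
      rw [← ZMod.intCast_zmod_eq_zero_iff_dvd]
      simp
    simp [Int.ediv_mul_cancel this]

/-- Normal forms. -/
abbrev NF (c : Bool → ℕ) := ℤ × Word (MM c)

/-- Normal forms seen from the factor `i`. -/
def eN (c : Bool → ℕ) [∀ i, NeZero (c i)] (i : Bool) : NF c ≃ ℤ × TT c i :=
  (Equiv.prodCongr (Equiv.refl ℤ) (splitW c i)).trans
    ((Equiv.prodAssoc ℤ (ZMod (c i)) (TT c i)).symm.trans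
      (Equiv.prodCongr (eZ (c i)) (Equiv.refl _)))

/-- Length of normal forms. -/
def nlen {c : Bool → ℕ} (n : NF c) : ℕ := n.1.natAbs + wlen n.2

theorem eN_symm (c : Bool → ℕ) [∀ i, NeZero (c i)] (i : Bool) (k : ℤ) (a : ZMod (c i))
    (t : TT c i) :
    (eN c i).symm (k * c i + a.valMinAbs, t) = (k, (splitW c i).symm (a, t)) := by
  rw [Equiv.symm_apply_eq]
  simp [eN, eZ]

theorem exists_eN_symm (c : Bool → ℕ) [∀ i, NeZero (c i)] (i : Bool) (n : NF c) :
    ∃ (k : ℤ) (a : ZMod (c i)) (t : TT c i),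
      n = (eN c i).symm (k * c i + a.valMinAbs, t) := by
  refine ⟨n.1, (splitW c i n.2).1, (splitW c i n.2).2, ?_⟩
  rw [eN_symm]
  simp

/-- Left multiplication by a power of a generator. -/
def shift (c : Bool → ℕ) [∀ i, NeZero (c i)] (i : Bool) : Equiv.Perm (NF c) :=
  (eN c i).trans (((Equiv.addRight (1 : ℤ)).prodCongr (Equiv.refl _)).trans (eN c i).symm)

/-- Left multiplication by the central generator. -/
def zshift (c : Bool → ℕ) : Equiv.Perm (NF c) := (Equiv.addRight (1 : ℤ)).prodCongr (Equiv.refl _)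

theorem shift_eN_symm (c : Bool → ℕ) [∀ i, NeZero (c i)] (i : Bool) (j : ℤ) (t : TT c i) :
    shift c i ((eN c i).symm (j, t)) = (eN c i).symm (j + 1, t) := by
  simp [shift]

theorem shift_zpow (c : Bool → ℕ) [∀ i, NeZero (c i)] (i : Bool) (m : ℤ) :
    ∀ (j : ℤ) (t : TT c i), (shift c i ^ m) ((eN c i).symm (j, t)) = (eN c i).symm (j + m, t) := by
  induction m using Int.induction_on with
  | zero => simp
  | succ m ih =>
    intro j t
    rw [zpow_add_one, Equiv.Perm.mul_apply, shift_eN_symm, ih]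
    congr 2
    ring
  | pred m ih =>
    intro j t
    have h := shift_eN_symm c i (j - 1) t
    rw [sub_add_cancel] at h
    rw [← h, ← Equiv.Perm.mul_apply, ← zpow_add_one, sub_add_cancel, ih]
    congr 2
    ring

theorem shift_pow (c : Bool → ℕ) [∀ i, NeZero (c i)] (i : Bool) :
    shift c i ^ c i = zshift c := by
  ext1 n
  obtain ⟨k, a, t, rfl⟩ := exists_eN_symm c i n
  rw [← zpow_natCast, shift_zpow, eN_symm,
    show k * (c i : ℤ) + a.valMinAbs + c i = (k + 1) * c i + a.valMinAbs by ring, eN_symm]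
  rfl

theorem zshift_zpow (c : Bool → ℕ) (m : ℤ) :
    ∀ (k : ℤ) (w : Word (MM c)), (zshift c ^ m) (k, w) = (k + m, w) := by
  have h1 : ∀ (k : ℤ) (w : Word (MM c)), zshift c (k, w) = (k + 1, w) := fun _ _ => rfl
  induction m using Int.induction_on with
  | zero => simp
  | succ m ih =>
    intro j t
    rw [zpow_add_one, Equiv.Perm.mul_apply, h1, ih]
    congr 1
    ring
  | pred m ih =>
    intro j t
    have h := h1 (j - 1) t
    rw [sub_add_cancel] at h
    rw [← h, ← Equiv.Perm.mul_apply, ← zpow_add_one, sub_add_cancel, ih]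
    congr 1
    ring

theorem nlen_eN_symm (c : Bool → ℕ) [∀ i, NeZero (c i)] (i : Bool) (k : ℤ) (a : ZMod (c i))
    (t : TT c i) : nlen ((eN c i).symm (k * c i + a.valMinAbs, t)) =
      k.natAbs + a.valMinAbs.natAbs + wlen t.1 := by
  rw [eN_symm, nlen, wlen_splitW_symm, add_assoc]

theorem nlen_shift (c : Bool → ℕ) [∀ i, NeZero (c i)] (hc : ∀ i, Odd (c i)) (i : Bool)
    (n : NF c) : nlen (shift c i n) ≤ nlen n + 1 ∧ nlen n ≤ nlen (shift c i n) + 1 := by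
  obtain ⟨k, a, t, rfl⟩ := exists_eN_symm c i n
  obtain ⟨m, hm⟩ := hc i
  have ha := a.valMinAbs_mem_Ioc
  rw [Set.mem_Ioc] at ha
  rw [shift_eN_symm, nlen_eN_symm]
  by_cases h : a.valMinAbs = m
  · have h2 : ((-m : ℤ) : ZMod (c i)).valMinAbs = -m := by
      rw [ZMod.valMinAbs_spec]
      exact ⟨rfl, by omega, by omega⟩
    have h3 : k * (c i : ℤ) + a.valMinAbs + 1 =
        (k + 1) * c i + ((-m : ℤ) : ZMod (c i)).valMinAbs := by
      rw [h2, h, hm]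
      push_cast
      ring
    rw [h3, nlen_eN_symm, h2, h]
    omega
  · have h2 : ((a.valMinAbs + 1 : ℤ) : ZMod (c i)).valMinAbs = a.valMinAbs + 1 := by
      rw [ZMod.valMinAbs_spec]
      exact ⟨rfl, by omega, by omega⟩
    have h3 : k * (c i : ℤ) + a.valMinAbs + 1 =
        k * c i + ((a.valMinAbs + 1 : ℤ) : ZMod (c i)).valMinAbs := by
      rw [h2]
      ring
    rw [h3, nlen_eN_symm, h2]
    omega

theorem nlen_zshift (c : Bool → ℕ) (n : NF c) :
    nlen (zshift c n) ≤ nlen n + 1 ∧ nlen n ≤ nlen (zshift c n) + 1 := by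
  rcases n with ⟨k, w⟩
  have h1 : zshift c (k, w) = (k + 1, w) := rfl
  rw [h1]
  simp only [nlen]
  omega

/-! ### The group -/

/-- The torus link group. -/
abbrev TG (c : Bool → ℕ) := PresentedGroup (torusRels (c true) (c false))

/-- The generators `x`, `y`. -/
def gen (c : Bool → ℕ) : Bool → TG c
  | true => PresentedGroup.of 0
  | false => PresentedGroup.of 1

/-- The generator `z`. -/
def gz (c : Bool → ℕ) : TG c := PresentedGroup.of 2

theorem gen_pow (c : Bool → ℕ) (i : Bool) : gen c i ^ c i = gz c := by
  cases i
  · exact PresentedGroup.mk_eq_mk_of_mul_inv_mem (rels := torusRels (c true) (c false))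
      (x := FreeGroup.of 1 ^ c false) (y := FreeGroup.of 2) (by simp [torusRels])
  · exact PresentedGroup.mk_eq_mk_of_mul_inv_mem (rels := torusRels (c true) (c false))
      (x := FreeGroup.of 0 ^ c true) (y := FreeGroup.of 2) (by simp [torusRels])

theorem commute_gz (c : Bool → ℕ) (i : Bool) : Commute (gz c) (gen c i) := by
  rw [← gen_pow c i]
  exact Commute.pow_self _ _

/-- Evaluation of normal forms. -/
noncomputable def ev (c : Bool → ℕ) (n : NF c) : TG c :=
  gz c ^ n.1 * (n.2.toList.map fun s => gen c s.1 ^ vexp s.2).prod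

theorem ev_eN_symm (c : Bool → ℕ) [∀ i, NeZero (c i)] (i : Bool) (j : ℤ) (t : TT c i) :
    ev c ((eN c i).symm (j, t)) = gen c i ^ j * ev c (0, t.1) := by
  obtain ⟨⟨k, a⟩, rfl⟩ := (eZ (c i)).surjective j
  have hj : eZ (c i) (k, a) = k * c i + a.valMinAbs := rfl
  rw [hj, eN_symm, splitW_symm, zpow_add, mul_comm k, zpow_mul, zpow_natCast, gen_pow, Word.rcons]
  split_ifs with h
  · have h' : a = 0 := h
    simp [ev, h']
  · simp [ev, vexp, mul_assoc]

/-- The permutations by which the generators act. -/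
def permGen (c : Bool → ℕ) [∀ i, NeZero (c i)] : Fin 3 → Equiv.Perm (NF c) :=
  ![shift c true, shift c false, zshift c]

/-- The action on normal forms. -/
noncomputable def rho (c : Bool → ℕ) [∀ i, NeZero (c i)] : TG c →* Equiv.Perm (NF c) :=
  PresentedGroup.toGroup (f := permGen c) (by
    intro r hr
    rcases hr with rfl | rfl
    · simp [permGen, shift_pow]
    · simp [permGen, shift_pow])

theorem rho_gen (c : Bool → ℕ) [∀ i, NeZero (c i)] (i : Bool) : rho c (gen c i) = shift c i := by
  cases i
  · exact PresentedGroup.toGroup.of _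
  · exact PresentedGroup.toGroup.of _

theorem rho_gz (c : Bool → ℕ) [∀ i, NeZero (c i)] : rho c (gz c) = zshift c :=
  PresentedGroup.toGroup.of _

theorem ev_shift (c : Bool → ℕ) [∀ i, NeZero (c i)] (i : Bool) (n : NF c) :
    ev c (shift c i n) = gen c i * ev c n := by
  obtain ⟨⟨j, t⟩, rfl⟩ := (eN c i).symm.surjective n
  rw [shift_eN_symm, ev_eN_symm, ev_eN_symm, add_comm, zpow_add, zpow_one, mul_assoc]

theorem ev_zshift (c : Bool → ℕ) (n : NF c) : ev c (zshift c n) = gz c * ev c n := by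
  rcases n with ⟨k, w⟩
  have h1 : zshift c (k, w) = (k + 1, w) := rfl
  rw [h1, ev, ev, add_comm, zpow_add, zpow_one, mul_assoc]

theorem ev_rho (c : Bool → ℕ) [∀ i, NeZero (c i)] (g : TG c) :
    ∀ n, ev c (rho c g n) = g * ev c n := by
  have hg : g ∈ Subgroup.closure (Set.range
      (PresentedGroup.of : Fin 3 → TG c)) := by
    rw [PresentedGroup.closure_range_of]
    trivial
  induction hg using Subgroup.closure_induction with
  | mem x hx =>
    obtain ⟨i, rfl⟩ := hx
    intro n
    fin_cases i
    · exact (congrArg (fun f => ev c (f n)) (rho_gen c true)).trans (ev_shift c true n)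
    · exact (congrArg (fun f => ev c (f n)) (rho_gen c false)).trans (ev_shift c false n)
    · exact (congrArg (fun f => ev c (f n)) (rho_gz c)).trans (ev_zshift c n)
  | one => simp
  | mul x y _ _ hx hy =>
    intro n
    rw [map_mul, Equiv.Perm.mul_apply, hx, hy, mul_assoc]
  | inv x _ hx =>
    intro n
    have := hx (rho c x⁻¹ n)
    rw [← Equiv.Perm.mul_apply, ← map_mul] at this
    simp only [mul_inv_cancel, map_one, Equiv.Perm.one_apply] at this
    rw [this]
    group

theorem rho_ev (c : Bool → ℕ) [∀ i, NeZero (c i)] (n : NF c) :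
    rho c (ev c n) (0, Word.empty) = n := by
  rcases n with ⟨k, w⟩
  have h0 : ∀ w, ev c (k, w) = gz c ^ k * ev c (0, w) := by simp [ev]
  rw [h0, map_mul, map_zpow, rho_gz, Equiv.Perm.mul_apply]
  suffices h : rho c (ev c (0, w)) (0, Word.empty) = (0, w) by
    rw [h, zshift_zpow, zero_add]
  induction w using Word.consRecOn with
  | empty => simp [ev]
  | cons i a w h1 h2 ih =>
    have h3 : ev c (0, Word.cons a w h1 h2) = gen c i ^ vexp a * ev c (0, w) := by
      simp [ev]
    have h4 := eN_symm c i 0 (0 : ZMod (c i)) ⟨w, h1⟩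
    have h5 := eN_symm c i 0 (Multiplicative.toAdd a) ⟨w, h1⟩
    have h6 : ((splitW c i).symm (0, ⟨w, h1⟩)) = w := by
      rw [splitW_symm, Word.rcons]
      exact dif_pos rfl
    have h7 : ((splitW c i).symm (Multiplicative.toAdd a, ⟨w, h1⟩)) = Word.cons a w h1 h2 := by
      rw [splitW_symm, Word.rcons]
      exact dif_neg h2
    rw [h6] at h4
    rw [h7] at h5
    rw [h3, map_mul, Equiv.Perm.mul_apply, ih, map_zpow, rho_gen, ← h4, shift_zpow, ← h5]
    simp [vexp]

/-- Normal form theorem. -/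
noncomputable def evEquiv (c : Bool → ℕ) [∀ i, NeZero (c i)] : NF c ≃ TG c where
  toFun := ev c
  invFun g := rho c g (0, Word.empty)
  left_inv := rho_ev c
  right_inv g := by
    rw [ev_rho]
    simp [ev]

/-! ### Word length -/

/-- The generating set. -/
def SS (c : Bool → ℕ) : Set (TG c) :=
  {PresentedGroup.of 0, PresentedGroup.of 1, PresentedGroup.of 2}

/-- Being a product of `n` generators or inverses. -/
def HasWord {G : Type*} [Group G] (S : Set G) (n : ℕ) (g : G) : Prop :=
  ∃ w : List G, w.length = n ∧ (∀ x ∈ w, x ∈ S ∨ x⁻¹ ∈ S) ∧ w.prod = g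

theorem HasWord.mul {G : Type*} [Group G] {S : Set G} {m n : ℕ} {g h : G}
    (hg : HasWord S m g) (hh : HasWord S n h) : HasWord S (m + n) (g * h) := by
  obtain ⟨w, rfl, h1, rfl⟩ := hg
  obtain ⟨v, rfl, h2, rfl⟩ := hh
  refine ⟨w ++ v, by simp, ?_, by simp⟩
  intro x hx
  rcases List.mem_append.1 hx with h | h
  · exact h1 x h
  · exact h2 x h

theorem HasWord.zpow {G : Type*} [Group G] {S : Set G} {g : G} (hg : g ∈ S) (k : ℤ) :
    HasWord S k.natAbs (g ^ k) := by
  rcases Int.natAbs_eq k with h | h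
  · refine ⟨List.replicate k.natAbs g, by simp, ?_, ?_⟩
    · intro x hx
      rw [List.eq_of_mem_replicate hx]
      exact Or.inl hg
    · rw [List.prod_replicate, ← zpow_natCast, ← h]
  · refine ⟨List.replicate k.natAbs g⁻¹, by simp, ?_, ?_⟩
    · intro x hx
      rw [List.eq_of_mem_replicate hx]
      exact Or.inr (by simpa using hg)
    · rw [List.prod_replicate, ← zpow_natCast, inv_zpow', ← h]

theorem gen_mem (c : Bool → ℕ) (i : Bool) : gen c i ∈ SS c := by
  cases i <;> simp [gen, SS]

theorem gz_mem (c : Bool → ℕ) : gz c ∈ SS c := by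
  simp [gz, SS]

theorem hasWord_ev (c : Bool → ℕ) (n : NF c) : HasWord (SS c) (nlen n) (ev c n) := by
  refine (HasWord.zpow (gz_mem c) _).mul ?_
  rw [wlen]
  induction n.2.toList with
  | nil => exact ⟨[], rfl, by simp, rfl⟩
  | cons s l ih =>
    simp only [List.map_cons, List.sum_cons, List.prod_cons]
    exact (HasWord.zpow (gen_mem c _) _).mul ih

theorem nlen_rho_mem (c : Bool → ℕ) [∀ i, NeZero (c i)] (hc : ∀ i, Odd (c i)) (g : TG c)
    (hg : g ∈ SS c) (n : NF c) :
    nlen (rho c g n) ≤ nlen n + 1 ∧ nlen n ≤ nlen (rho c g n) + 1 := by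
  rcases hg with rfl | rfl | rfl
  · have := nlen_shift c hc true n
    rwa [← rho_gen] at this
  · have := nlen_shift c hc false n
    rwa [← rho_gen] at this
  · have := nlen_zshift c n
    rwa [← rho_gz] at this

theorem nlen_rho_list (c : Bool → ℕ) [∀ i, NeZero (c i)] (hc : ∀ i, Odd (c i))
    (l : List (TG c)) (hl : ∀ x ∈ l, x ∈ SS c ∨ x⁻¹ ∈ SS c) :
    nlen (rho c l.prod (0, Word.empty)) ≤ l.length := by
  induction l with
  | nil => simp [nlen, wlen]
  | cons s l ih =>
    have ih := ih fun x hx => hl x (List.mem_cons_of_mem _ hx)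
    rw [List.prod_cons, map_mul, Equiv.Perm.mul_apply, List.length_cons]
    rcases hl s List.mem_cons_self with h | h
    · have := (nlen_rho_mem c hc s h (rho c l.prod (0, Word.empty))).1
      omega
    · have := (nlen_rho_mem c hc s⁻¹ h (rho c s (rho c l.prod (0, Word.empty)))).1
      have h2 := (nlen_rho_mem c hc s⁻¹ h (rho c s (rho c l.prod (0, Word.empty)))).2
      rw [← Equiv.Perm.mul_apply (rho c s⁻¹), ← map_mul] at h2
      simp only [inv_mul_cancel, map_one, Equiv.Perm.one_apply] at h2
      omega

theorem wordLength_ev (c : Bool → ℕ) [∀ i, NeZero (c i)] (hc : ∀ i, Odd (c i)) (n : NF c) :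
    wordLength (SS c) (ev c n) = nlen n := by
  apply le_antisymm
  · exact Nat.sInf_le (hasWord_ev c n)
  · have hb : HasWord (SS c) (wordLength (SS c) (ev c n)) (ev c n) :=
      Nat.sInf_mem (s := {k | HasWord (SS c) k (ev c n)}) ⟨_, hasWord_ev c n⟩
    obtain ⟨w, h0, h1, h2⟩ := hb
    rw [← h0]
    have := nlen_rho_list c hc w h1
    rwa [h2, rho_ev] at this

theorem growth_eq (c : Bool → ℕ) [∀ i, NeZero (c i)] (hc : ∀ i, Odd (c i)) :
    growthSeries (SS c) = gs Int.natAbs * gs (wlen (c := c)) := by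
  have h : growthSeries (SS c) = gs (wordLength (SS c)) := rfl
  rw [h, ← gs_equiv (evEquiv c) nlen _ (wordLength_ev c hc), ← gs_prod]
  · rfl
  · intro n
    exact (Set.finite_Icc (-(n : ℤ)) n).subset (by
      intro a ha
      simp only [Set.mem_ofPred_eq] at ha
      rw [Set.mem_Icc]
      omega)
  · exact wlen_finite c

/-- For `p, q > 1` both odd, the growth series `A` of `T'_{p,q}` with respect to
`{x, y, z}` satisfies `A = C_∞ C_p C_q / (C_p + C_q - C_p C_q)`, i.e.
`(1-t)(C_p + C_q - C_p C_q) A = (1+t) C_p C_q`. -/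
theorem stmt_10 (p q : ℕ) (hp : 1 < p) (hq : 1 < q) (hpo : Odd p) (hqo : Odd q) :
    (1 - PowerSeries.X) *
        ((Cpol p : PowerSeries ℚ) + (Cpol q : PowerSeries ℚ) -
          (Cpol p : PowerSeries ℚ) * (Cpol q : PowerSeries ℚ)) *
        growthSeries ({PresentedGroup.of 0, PresentedGroup.of 1, PresentedGroup.of 2} :
          Set (PresentedGroup (torusRels p q))) =
      (1 + PowerSeries.X) * (Cpol p : PowerSeries ℚ) * (Cpol q : PowerSeries ℚ) := by

  let c : Bool → ℕ := fun b => cond b p q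
  have hc : ∀ i, Odd (c i) := by
    rintro (_ | _)
    · exact hqo
    · exact hpo
  have : ∀ i, NeZero (c i) := by
    rintro (_ | _)
    · exact ⟨show q ≠ 0 by omega⟩
    · exact ⟨show p ≠ 0 by omega⟩
  have h1 : growthSeries ({PresentedGroup.of 0, PresentedGroup.of 1, PresentedGroup.of 2} :
      Set (PresentedGroup (torusRels p q))) = gs Int.natAbs * gs (wlen (c := c)) :=
    growth_eq c hc
  have h2 : ((Cpol p : PowerSeries ℚ) + (Cpol q : PowerSeries ℚ) -
      (Cpol p : PowerSeries ℚ) * (Cpol q : PowerSeries ℚ)) * gs (wlen (c := c)) =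
      (Cpol p : PowerSeries ℚ) * (Cpol q : PowerSeries ℚ) := gs_word c hc
  have h3 := gs_int
  rw [h1]
  calc _ = ((1 - PowerSeries.X) * gs Int.natAbs) *
        (((Cpol p : PowerSeries ℚ) + (Cpol q : PowerSeries ℚ) -
          (Cpol p : PowerSeries ℚ) * (Cpol q : PowerSeries ℚ)) * gs (wlen (c := c))) := by ring
    _ = _ := by rw [h2, h3]; ring
end

section
/- For any p, q > 1, the growth series of T'_{p,q} = ⟨x, y, z | x^p = y^q = z⟩ with respect to {x, y, z} equals C_∞(t)·C_p(t)·C_q(t)/(C_p(t)+C_q(t)−C_p(t)C_q(t)) + (m_q(t)·C_p(t)² + m_p(t)·C_q(t)²)/(C_p(t)+C_q(t)−C_p(t)C_q(t))², where m_r(t) = t^{r/2} if r is even and 0 if r is odd. -/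
open PowerSeries

/-- `m_r(t) = t^{r/2}` if `r` is even, `0` if `r` is odd. -/
noncomputable def mser (r : ℕ) : PowerSeries ℚ :=
  if r % 2 = 0 then PowerSeries.X ^ (r / 2) else 0

namespace TorusGrowth

open Monoid

abbrev TM (P : Bool → ℕ) (i : Bool) : Type := Multiplicative (ZMod (P i))

abbrev TW (P : Bool → ℕ) : Type := CoprodI.Word (TM P)

noncomputable def rep {P : Bool → ℕ} {i : Bool} (a : TM P i) : ℤ := (Multiplicative.toAdd a).valMinAbs

noncomputable def hf {P : Bool → ℕ} {i : Bool} (a : TM P i) : ℕ := if 2 * rep a = (P i : ℤ) then 1 else 0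

noncomputable def llen {P : Bool → ℕ} (l : List (Σ i, TM P i)) : ℕ := (l.map fun s => (rep s.2).natAbs).sum

noncomputable def lhalf {P : Bool → ℕ} (l : List (Σ i, TM P i)) : ℕ := (l.map fun s => hf s.2).sum

noncomputable def lsec {P : Bool → ℕ} {G : Type*} [Group G] (gx : Bool → G) (l : List (Σ i, TM P i)) : G :=
  (l.map fun s => gx s.1 ^ rep s.2).prod

/-- distance of `k` from the interval `[-n, 0]` -/
def dst (n : ℕ) (k : ℤ) : ℕ := k.toNat + (-n - k).toNat

noncomputable def sL {P : Bool → ℕ} (st : TW P × ℤ) : ℕ := llen st.1.toList + dst (lhalf st.1.toList) st.2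

noncomputable def sec {P : Bool → ℕ} {G : Type*} [Group G] (gx : Bool → G) (z : G) (st : TW P × ℤ) : G :=
  lsec gx st.1.toList * z ^ st.2

lemma rep_one {P : Bool → ℕ} {i : Bool} : rep (1 : TM P i) = 0 := by
  simp [rep]

lemma hf_one {P : Bool → ℕ} {i : Bool} (h : 1 < P i) : hf (1 : TM P i) = 0 := by
  simp [hf, rep_one]; omega

lemma llen_rcons {P : Bool → ℕ} {i : Bool} (w : CoprodI.Word.Pair (TM P) i) :
    llen (CoprodI.Word.rcons w).toList = (rep w.head).natAbs + llen w.tail.toList := by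
  unfold CoprodI.Word.rcons
  split_ifs with h
  · simp [h, rep_one]
  · simp [llen]

lemma lhalf_rcons {P : Bool → ℕ} {i : Bool} (hi : 1 < P i) (w : CoprodI.Word.Pair (TM P) i) :
    lhalf (CoprodI.Word.rcons w).toList = hf w.head + lhalf w.tail.toList := by
  unfold CoprodI.Word.rcons
  split_ifs with h
  · simp [h, hf_one hi]
  · simp [lhalf]

lemma lsec_rcons {P : Bool → ℕ} {G : Type*} [Group G] (gx : Bool → G) {i : Bool}
    (w : CoprodI.Word.Pair (TM P) i) :
    lsec gx (CoprodI.Word.rcons w).toList = gx i ^ rep w.head * lsec gx w.tail.toList := by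
  unfold CoprodI.Word.rcons
  split_ifs with h
  · simp [h, rep_one]
  · simp [lsec]

def HasWord {G : Type*} [Group G] (S : Set G) (n : ℕ) (g : G) : Prop :=
  ∃ w : List G, w.length = n ∧ (∀ x ∈ w, x ∈ S ∨ x⁻¹ ∈ S) ∧ w.prod = g

lemma HasWord.mul {G : Type*} [Group G] {S : Set G} {m n : ℕ} {g h : G}
    (hg : HasWord S m g) (hh : HasWord S n h) : HasWord S (m + n) (g * h) := by
  obtain ⟨v, rfl, hv, rfl⟩ := hg
  obtain ⟨w, rfl, hw, rfl⟩ := hh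
  refine ⟨v ++ w, by simp, ?_, by simp⟩
  intro x hx
  rcases List.mem_append.1 hx with h | h
  · exact hv x h
  · exact hw x h

lemma HasWord.zpow {G : Type*} [Group G] {S : Set G} {g : G} (hg : g ∈ S) (k : ℤ) :
    HasWord S k.natAbs (g ^ k) := by
  rcases le_total 0 k with h | h
  · refine ⟨List.replicate k.natAbs g, by simp, ?_, ?_⟩
    · intro x hx; rw [List.eq_of_mem_replicate hx]; exact Or.inl hg
    · rw [List.prod_replicate, ← zpow_natCast]; congr 1; omega
  · refine ⟨List.replicate k.natAbs g⁻¹, by simp, ?_, ?_⟩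
    · intro x hx; rw [List.eq_of_mem_replicate hx]; right; simpa using hg
    · rw [List.prod_replicate, ← zpow_natCast, inv_zpow, ← zpow_neg]; congr 1; omega

section
variable {P : Bool → ℕ} {G : Type*} [Group G] {gx : Bool → G} {z : G}

lemma gx_zpow_mul (hz : ∀ i, gx i ^ P i = z) (i : Bool) (a k : ℤ) :
    gx i ^ (a + P i * k) = gx i ^ a * z ^ k := by
  rw [zpow_add, zpow_mul, zpow_natCast, hz]

lemma z_comm_lsec (hz : ∀ i, gx i ^ P i = z) (l : List (Σ i, TM P i)) : Commute z (lsec gx l) := by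
  induction l with
  | nil => simp [lsec]
  | cons s l ih =>
    have : lsec gx (s :: l) = gx s.1 ^ rep s.2 * lsec gx l := by simp [lsec]
    rw [this]
    refine Commute.mul_right ?_ ih
    rw [← hz s.1]
    exact ((Commute.refl (gx s.1)).pow_left _).zpow_right _

lemma upper (hz : ∀ i, gx i ^ P i = z) {S : Set G} (hS : ∀ i, gx i ∈ S) (hzS : z ∈ S)
    (l : List (Σ i, TM P i)) (k : ℤ) :
    HasWord S (llen l + dst (lhalf l) k) (lsec gx l * z ^ k) := by
  induction l generalizing k with
  | nil =>
    have := HasWord.zpow hzS k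
    simp only [llen, lhalf, lsec, dst, List.map_nil, List.sum_nil, List.prod_nil, one_mul]
    convert this using 1
    omega
  | cons s l ih =>
    have e1 : lsec gx (s :: l) = gx s.1 ^ rep s.2 * lsec gx l := by simp [lsec]
    have e2 : llen (s :: l) = (rep s.2).natAbs + llen l := by simp [llen]
    have e3 : lhalf (s :: l) = hf s.2 + lhalf l := by simp [lhalf]
    rw [e1, e2, e3]
    by_cases h : 2 * rep s.2 = (P s.1 : ℤ) ∧ k < 0
    · have := (HasWord.zpow (hS s.1) (-rep s.2)).mul (ih (k + 1))
      have e4 : hf s.2 = 1 := by simp [hf, h.1]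
      have e5 : gx s.1 ^ rep s.2 = gx s.1 ^ (-rep s.2) * z := by
        have := gx_zpow_mul hz s.1 (-rep s.2) 1
        rw [zpow_one] at this
        rw [← this]; congr 1; omega
      rw [e4, e5]
      convert this using 1
      · simp only [dst]; omega
      · rw [zpow_add, zpow_one, mul_assoc, mul_assoc, ← mul_assoc z, (z_comm_lsec hz l).eq, mul_assoc,
          ((Commute.refl z).zpow_right k).eq]
    · have := (HasWord.zpow (hS s.1) (rep s.2)).mul (ih k)
      rw [mul_assoc]
      convert this using 1
      simp only [dst, hf]
      split_ifs with h'
      · omega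
      · omega

lemma step_arith (p : ℕ) (hp : 1 < p) (h h' e δ k : ℤ) (n : ℕ) (h1 : -p < h * 2) (h2 : h * 2 ≤ p)
    (h1' : -p < h' * 2) (h2' : h' * 2 ≤ p) (hδ : δ = 1 ∨ δ = -1) (he : h + δ = h' + p * e) :
    h'.natAbs + dst ((if 2 * h' = (p : ℤ) then 1 else 0) + n) (k + e) ≤
      h.natAbs + dst ((if 2 * h = (p : ℤ) then 1 else 0) + n) k + 1 := by
  have : e = 0 ∨ e = 1 ∨ e = -1 := by
    have a1 : e < 2 := by by_contra hh; push Not at hh; have := mul_le_mul_of_nonneg_left hh (Int.natCast_nonneg p); omega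
    have a2 : -2 < e := by by_contra hh; push Not at hh; have := mul_le_mul_of_nonneg_left hh (Int.natCast_nonneg p); omega
    omega
  unfold dst
  rcases this with rfl | rfl | rfl <;> rcases hδ with rfl | rfl <;> split_ifs <;> omega

lemma step_gx (hz : ∀ i, gx i ^ P i = z) (hP : ∀ i, 1 < P i) (i : Bool) (δ : ℤ)
    (hδ : δ = 1 ∨ δ = -1) (st : TW P × ℤ) :
    ∃ st' : TW P × ℤ, sec gx z st' = gx i ^ δ * sec gx z st ∧ sL st' ≤ sL st + 1 := by
  have : NeZero (P i) := ⟨by have := hP i; omega⟩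
  obtain ⟨w, k⟩ := st
  obtain ⟨pr, rfl⟩ := (CoprodI.Word.equivPair i).symm.surjective w
  rw [CoprodI.Word.equivPair_symm]
  obtain ⟨h, t, ht⟩ := pr
  let a : ZMod (P i) := ((rep h + δ : ℤ) : ZMod (P i))
  let h' : TM P i := Multiplicative.ofAdd a
  have hr : rep h' = a.valMinAbs := rfl
  have hdvd : (P i : ℤ) ∣ (rep h + δ) - rep h' := by
    rw [← ZMod.intCast_eq_intCast_iff_dvd_sub, hr, ZMod.coe_valMinAbs]
  obtain ⟨e, he⟩ := hdvd
  have he' : rep h + δ = rep h' + P i * e := by linarith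
  refine ⟨(CoprodI.Word.rcons ⟨h', t, ht⟩, k + e), ?_, ?_⟩
  · simp only [sec, lsec_rcons]
    rw [mul_assoc (gx i ^ rep h), ← mul_assoc (gx i ^ δ), ← zpow_add, add_comm δ, he',
      gx_zpow_mul hz, mul_assoc, mul_assoc, ← mul_assoc (z ^ e), ((z_comm_lsec hz _).zpow_left e).eq,
      mul_assoc, ← zpow_add, add_comm e]
  · simp only [sL, llen_rcons, lhalf_rcons (hP i)]
    have b1 := (ZMod.valMinAbs_mem_Ioc (Multiplicative.toAdd h))
    have b2 := (ZMod.valMinAbs_mem_Ioc a)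
    have := step_arith (P i) (hP i) (rep h) (rep h') e δ k (lhalf t.toList) b1.1 b1.2 b2.1 b2.2 hδ he'
    simp only [hf]
    omega

lemma step_z (hz : ∀ i, gx i ^ P i = z) (δ : ℤ)
    (hδ : δ = 1 ∨ δ = -1) (st : TW P × ℤ) :
    ∃ st' : TW P × ℤ, sec gx z st' = z ^ δ * sec gx z st ∧ sL st' ≤ sL st + 1 := by
  refine ⟨(st.1, st.2 + δ), ?_, ?_⟩
  · simp only [sec]
    rw [← mul_assoc, ((z_comm_lsec hz _).zpow_left δ).eq, mul_assoc, ← zpow_add, add_comm δ]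
  · simp only [sL, dst]
    rcases hδ with rfl | rfl <;> omega

lemma lower (hz : ∀ i, gx i ^ P i = z) (hP : ∀ i, 1 < P i) {S : Set G}
    (hS : ∀ g ∈ S, (∃ i, g = gx i) ∨ g = z) (n : ℕ) (g : G) (hg : HasWord S n g) :
    ∃ st : TW P × ℤ, sec gx z st = g ∧ sL st ≤ n := by
  obtain ⟨w, rfl, hw, rfl⟩ := hg
  induction w with
  | nil =>
    refine ⟨(CoprodI.Word.empty, 0), ?_, ?_⟩
    · simp [sec, lsec]
    · simp [sL, llen, lhalf, dst]
  | cons x w ih =>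
    obtain ⟨st, h1, h2⟩ := ih (fun y hy => hw y (List.mem_cons_of_mem _ hy))
    have key : ∃ st' : TW P × ℤ, sec gx z st' = x * sec gx z st ∧ sL st' ≤ sL st + 1 := by
      rcases hw x List.mem_cons_self with h | h
      · rcases hS _ h with ⟨i, rfl⟩ | rfl
        · simpa using step_gx hz hP i 1 (Or.inl rfl) st
        · simpa using step_z hz 1 (Or.inl rfl) st
      · rcases hS _ h with ⟨i, hi⟩ | hi
        · have := step_gx hz hP i (-1) (Or.inr rfl) st
          rwa [← hi, zpow_neg_one, inv_inv] at this
        · have := step_z hz (-1) (Or.inr rfl) st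
          rwa [zpow_neg_one, show z⁻¹ = x by rw [← hi, inv_inv]] at this
    obtain ⟨st', h3, h4⟩ := key
    refine ⟨st', by rw [h3, h1, List.prod_cons], ?_⟩
    simp only [List.length_cons]; omega

lemma sec_inj
    (φ : G →* CoprodI (TM P)) (hφ : ∀ i, φ (gx i) = CoprodI.of (M := TM P) (i := i) (Multiplicative.ofAdd (1 : ZMod (P i))))
    (hφz : φ z = 1) (ψ : G →* Multiplicative ℤ) (hψz : ψ z ≠ 1) :
    Function.Injective (sec gx z : TW P × ℤ → G) := by
  have hsec : ∀ w : TW P, φ (lsec gx w.toList) = w.prod := by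
    intro w
    rw [lsec, map_list_prod, List.map_map, CoprodI.Word.prod]
    congr 1
    apply List.map_congr_left
    rintro ⟨i, a⟩ -
    simp only [Function.comp, map_zpow, hφ]
    rw [← map_zpow]
    congr 1
    rw [← ofAdd_zsmul]
    simp [rep]
  rintro ⟨w, k⟩ ⟨w', k'⟩ h
  have hw : w = w' := by
    have := congrArg φ h
    simp only [sec, map_mul, hsec, map_zpow, hφz, one_zpow, mul_one] at this
    exact (CoprodI.Word.equiv (M := TM P)).symm.injective this
  subst hw
  have := congrArg ψ h
  simp only [sec, map_mul, map_zpow] at this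
  have h2 := mul_left_cancel this
  have h3 := congrArg Multiplicative.toAdd h2
  simp only [toAdd_zpow, smul_eq_mul] at h3
  have h4 : (Multiplicative.toAdd (ψ z)) ≠ 0 := by simpa using hψz
  rw [mul_right_cancel₀ h4 h3]

lemma wordLength_sec (hz : ∀ i, gx i ^ P i = z) (hP : ∀ i, 1 < P i) {S : Set G}
    (hS : ∀ g ∈ S, (∃ i, g = gx i) ∨ g = z) (hS' : ∀ i, gx i ∈ S) (hzS : z ∈ S)
    (hinj : Function.Injective (sec gx z : TW P × ℤ → G)) (st : TW P × ℤ) :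
    wordLength S (sec gx z st) = sL st := by
  have hup : HasWord S (sL st) (sec gx z st) := upper hz hS' hzS st.1.toList st.2
  apply le_antisymm
  · exact Nat.sInf_le hup
  · refine le_csInf ⟨_, hup⟩ ?_
    intro n hn
    obtain ⟨st', h1, h2⟩ := lower hz hP hS n _ hn
    rw [← hinj h1]; exact h2

lemma sL_finite (hz : ∀ i, gx i ^ P i = z) {S : Set G} (hfin : S.Finite)
    (hS' : ∀ i, gx i ∈ S) (hzS : z ∈ S)
    (hinj : Function.Injective (sec gx z : TW P × ℤ → G)) (n : ℕ) :
    {st : TW P × ℤ | sL st = n}.Finite := by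
  have hS2 : (S ∪ S⁻¹).Finite := hfin.union hfin.inv
  have : {g : G | HasWord S n g}.Finite := by
    have : Finite ↥(S ∪ S⁻¹) := hS2
    have := (List.finite_length_eq ↥(S ∪ S⁻¹) n).image (fun l => (l.map Subtype.val).prod)
    refine this.subset ?_
    rintro g ⟨w, h1, h2, h3⟩
    refine ⟨w.attach.map (fun x => ⟨x.1, by simpa using h2 x.1 x.2⟩), by simpa using h1, ?_⟩
    simp [← h3, List.map_map, Function.comp_def]
  refine (this.preimage hinj.injOn).subset ?_
  rintro st rfl
  exact upper hz hS' hzS st.1.toList st.2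

end

end TorusGrowth

namespace TorusGrowth

open Monoid PowerSeries
open scoped PowerSeries.WithPiTopology

lemma summ {α : Type*} (ℓ : α → ℕ) (hfin : ∀ n, {a | ℓ a = n}.Finite) (c : α → ℕ) :
    Summable (fun a => (c a : ℚ⟦X⟧) * X ^ ℓ a) := by
  rw [PowerSeries.WithPiTopology.summable_iff_summable_coeff]
  intro n
  apply summable_of_hasFiniteSupport
  refine (hfin n).subset ?_
  intro a ha
  simp only [Function.mem_support] at ha
  by_contra hne
  apply ha
  rw [← map_natCast (PowerSeries.C (R := ℚ)), PowerSeries.coeff_C_mul, PowerSeries.coeff_X_pow,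
    if_neg (fun h => hne h.symm), mul_zero]

lemma summ1 {α : Type*} (ℓ : α → ℕ) (hfin : ∀ n, {a | ℓ a = n}.Finite) :
    Summable (fun a => (X : ℚ⟦X⟧) ^ ℓ a) := by
  simpa using summ ℓ hfin (fun _ => 1)

lemma geomInt (n : ℕ) : ∃ B : ℚ⟦X⟧, HasSum (fun k : ℤ => (X : ℚ⟦X⟧) ^ dst n k) B ∧
    (1 - X) * B = 1 + X + (n : ℚ⟦X⟧) * (1 - X) := by
  have hs : Summable (fun k : ℕ => (X : ℚ⟦X⟧) ^ k) := summ1 (fun k => k) (by simp)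
  have hg := PowerSeries.WithPiTopology.one_sub_mul_tsum_pow_of_constantCoeff_eq_zero (R := ℚ)
    (f := X) (by simp)
  set a := ∑' k : ℕ, (X : ℚ⟦X⟧) ^ k with ha
  have h1 : HasSum (fun k : ℕ => (X : ℚ⟦X⟧) ^ dst n (k : ℤ)) a := by
    convert hs.hasSum using 2 with k
    congr 1
    simp only [dst]; omega
  have h2 : HasSum (fun k : ℕ => (X : ℚ⟦X⟧) ^ dst n (-((k : ℤ) + 1))) ((n : ℚ⟦X⟧) + X * a) := by
    rw [← hasSum_nat_add_iff' n]
    have e : ∑ i ∈ Finset.range n, (X : ℚ⟦X⟧) ^ dst n (-((i : ℤ) + 1)) = (n : ℚ⟦X⟧) := by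
      rw [Finset.sum_congr rfl (g := fun _ => 1)]
      · simp
      · intro i hi
        rw [Finset.mem_range] at hi
        have : dst n (-((i : ℤ) + 1)) = 0 := by simp only [dst]; omega
        rw [this, pow_zero]
    rw [e, add_sub_cancel_left]
    have h3 := hs.hasSum.mul_left (X : ℚ⟦X⟧)
    have e2 : (fun k : ℕ => (X : ℚ⟦X⟧) ^ dst n (-(((k + n : ℕ) : ℤ) + 1))) = fun k => X * X ^ k := by
      funext k
      rw [← pow_succ']
      congr 1
      simp only [dst]; push_cast; omega
    rw [e2]
    exact h3
  refine ⟨_, HasSum.of_nat_of_neg_add_one h1 h2, ?_⟩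
  linear_combination (1 + X) * hg

variable {P : Bool → ℕ}

def TT (P : Bool → ℕ) (i : Bool) : Set (TW P) := {t | t.fstIdx ≠ some i}

def eW (P : Bool → ℕ) (i : Bool) : TM P i × TT P i ≃ TW P where
  toFun x := CoprodI.Word.rcons ⟨x.1, x.2.1, x.2.2⟩
  invFun w := ((CoprodI.Word.equivPair i w).head, ⟨(CoprodI.Word.equivPair i w).tail,
    (CoprodI.Word.equivPair i w).fstIdx_ne⟩)
  left_inv x := by
    have h := (CoprodI.Word.equivPair i).apply_symm_apply ⟨x.1, x.2.1, x.2.2⟩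
    rw [CoprodI.Word.equivPair_symm] at h
    refine Prod.ext ?_ (Subtype.ext ?_)
    · exact congrArg CoprodI.Word.Pair.head h
    · exact congrArg CoprodI.Word.Pair.tail h
  right_inv w := (CoprodI.Word.equivPair i).symm_apply_apply w

lemma eW_apply (i : Bool) (x : TM P i × TT P i) :
    eW P i x = CoprodI.Word.rcons ⟨x.1, x.2.1, x.2.2⟩ := rfl

noncomputable def cS (P : Bool → ℕ) [∀ i, NeZero (P i)] (i : Bool) : ℚ⟦X⟧ := ∑ h : TM P i, X ^ (rep h).natAbs
noncomputable def mS (P : Bool → ℕ) [∀ i, NeZero (P i)] (i : Bool) : ℚ⟦X⟧ :=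
  ∑ h : TM P i, (hf h : ℚ⟦X⟧) * X ^ (rep h).natAbs

lemma finT (i : Bool) (hfin : ∀ n, {w : TW P | llen w.toList = n}.Finite) (n : ℕ) :
    {w : TT P i | llen w.1.toList = n}.Finite :=
  (hfin n).preimage Subtype.val_injective.injOn

lemma decF [∀ i, NeZero (P i)] (i : Bool) 
    (hfin : ∀ n, {w : TW P | llen w.toList = n}.Finite) :
    ∑' w : TW P, (X : ℚ⟦X⟧) ^ llen w.toList = cS P i * ∑' w : TT P i, X ^ llen w.1.toList := by
  have e : ∀ x : TM P i × TT P i, (X : ℚ⟦X⟧) ^ llen (eW P i x).toList =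
      X ^ (rep x.1).natAbs * X ^ llen x.2.1.toList := by
    intro x
    simp only [eW_apply, llen_rcons, pow_add]
  have hs' : Summable (fun w : TT P i => (X : ℚ⟦X⟧) ^ llen w.1.toList) :=
    summ1 _ (finT i hfin)
  have hs := summ1 _ hfin
  rw [← (eW P i).tsum_eq]
  refine (Summable.tsum_prod' ((eW P i).summable_iff.2 hs) ?_).trans ?_
  rotate_left
  · simp only [Function.comp_def, e]
    rw [tsum_fintype, cS, Finset.sum_mul]
    refine Finset.sum_congr rfl fun h _ => ?_
    rw [hs'.tsum_mul_left]
  · intro h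
    simp only [Function.comp_def, e]
    exact hs'.mul_left _

lemma decM [∀ i, NeZero (P i)] (hP : ∀ i, 1 < P i) (i : Bool) 
    (hfin : ∀ n, {w : TW P | llen w.toList = n}.Finite) :
    ∑' w : TW P, (lhalf w.toList : ℚ⟦X⟧) * X ^ llen w.toList =
      mS P i * (∑' w : TT P i, X ^ llen w.1.toList) +
      cS P i * ∑' w : TT P i, (lhalf w.1.toList : ℚ⟦X⟧) * X ^ llen w.1.toList := by
  have e : ∀ x : TM P i × TT P i, (lhalf (eW P i x).toList : ℚ⟦X⟧) * X ^ llen (eW P i x).toList =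
      (hf x.1 : ℚ⟦X⟧) * X ^ (rep x.1).natAbs * X ^ llen x.2.1.toList +
      X ^ (rep x.1).natAbs * ((lhalf x.2.1.toList : ℚ⟦X⟧) * X ^ llen x.2.1.toList) := by
    intro x
    simp only [eW_apply, llen_rcons, lhalf_rcons (hP i), pow_add]
    push_cast
    ring
  have hs' : Summable (fun w : TT P i => (X : ℚ⟦X⟧) ^ llen w.1.toList) :=
    summ1 _ (finT i hfin)
  have hm' : Summable (fun w : TT P i => (lhalf w.1.toList : ℚ⟦X⟧) * X ^ llen w.1.toList) :=
    summ _ (finT i hfin) (fun w : TT P i => lhalf w.1.toList)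
  have hm := summ _ hfin (fun w => lhalf w.toList)
  rw [← (eW P i).tsum_eq]
  refine (Summable.tsum_prod' ((eW P i).summable_iff.2 hm) ?_).trans ?_
  rotate_left
  · simp only [Function.comp_def, e]
    rw [tsum_fintype, cS, mS, Finset.sum_mul, Finset.sum_mul, ← Finset.sum_add_distrib]
    refine Finset.sum_congr rfl fun h _ => ?_
    rw [(hs'.mul_left _).tsum_add (hm'.mul_left _), hs'.tsum_mul_left, hm'.tsum_mul_left]
  · intro h
    simp only [Function.comp_def, e]
    exact (hs'.mul_left _).add (hm'.mul_left _)

lemma split_sum (f : TW P → ℚ⟦X⟧) (hs : Summable f)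
    (hs' : ∀ i, Summable (fun w : TT P i => f w)) :
    (∑' w, f w) + f CoprodI.Word.empty = (∑' w : TT P false, f w) + ∑' w : TT P true, f w := by
  classical
  have e : ∀ w, (TT P false).indicator f w + (TT P true).indicator f w =
      f w + if w = CoprodI.Word.empty then f CoprodI.Word.empty else 0 := by
    intro w
    induction w using CoprodI.Word.consRecOn with
    | empty => simp [TT, CoprodI.Word.fstIdx]
    | cons i m w h1 h2 _ =>
      have hne : CoprodI.Word.cons m w h1 h2 ≠ CoprodI.Word.empty := by
        intro h
        have := congrArg CoprodI.Word.toList h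
        simp at this
      rw [if_neg hne]
      cases i <;> simp [TT, Set.indicator]
  rw [tsum_subtype, tsum_subtype, ← (summable_subtype_iff_indicator.1 (hs' false)).tsum_add
    (summable_subtype_iff_indicator.1 (hs' true))]
  simp only [e]
  rw [hs.tsum_add, tsum_ite_eq]
  exact (hasSum_ite_eq _ _).summable

lemma main_alg [∀ i, NeZero (P i)] (hP : ∀ i, 1 < P i) 
    (hfin : ∀ n, {st : TW P × ℤ | sL st = n}.Finite) (A : ℚ⟦X⟧)
    (hA : HasSum (fun st : TW P × ℤ => (X : ℚ⟦X⟧) ^ sL st) A) :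
    (1 - X) * (cS P false + cS P true - cS P false * cS P true) ^ 2 * A =
      (1 + X) * cS P false * cS P true * (cS P false + cS P true - cS P false * cS P true) +
      (1 - X) * (mS P true * cS P false ^ 2 + mS P false * cS P true ^ 2) := by
  have hfin' : ∀ n, {w : TW P | llen w.toList = n}.Finite := by
    intro n
    have hinj : Function.Injective (fun w : TW P => (w, (0 : ℤ))) := fun a b h => by simpa using h
    refine ((hfin n).preimage hinj.injOn).subset ?_
    rintro w rfl
    simp [sL, dst]
  have hs := summ1 _ hfin'
  have hm := summ _ hfin' (fun w => lhalf w.toList)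
  have f0 := decF false hfin'
  have f1 := decF true hfin'
  have m0 := decM hP false hfin'
  have m1 := decM hP true hfin'
  have s1 := split_sum _ hs (fun i => summ1 _ (finT i hfin'))
  have s2 := split_sum _ hm
    (fun i => summ _ (finT i hfin') (fun w : TT P i => lhalf w.1.toList))
  have hAe : (1 - X) * A = (1 + X) * (∑' w : TW P, (X : ℚ⟦X⟧) ^ llen w.toList) +
      (1 - X) * ∑' w : TW P, (lhalf w.toList : ℚ⟦X⟧) * X ^ llen w.toList := by
    choose B hB hB' using geomInt
    have h1 : HasSum (fun w : TW P => X ^ llen w.toList * B (lhalf w.toList)) A := by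
      refine hA.prod_fiberwise ?_
      intro w
      simp only [sL, pow_add]
      exact (hB _).mul_left _
    have h2 := h1.mul_left (1 - X)
    have h3 := (hs.hasSum.mul_left (1 + X)).add (hm.hasSum.mul_left (1 - X))
    refine h2.unique ?_
    convert h3 using 2 with w
    linear_combination X ^ llen w.toList * hB' (lhalf w.toList)
  have z1 : llen (CoprodI.Word.empty : TW P).toList = 0 := by simp [llen]
  have z2 : lhalf (CoprodI.Word.empty : TW P).toList = 0 := by simp [lhalf]
  simp only [z1, z2, pow_zero, Nat.cast_zero, zero_mul, add_zero] at s1 s2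
  generalize (∑' w : TW P, (X : ℚ⟦X⟧) ^ llen w.toList) = F at *
  generalize (∑' w : TW P, (lhalf w.toList : ℚ⟦X⟧) * X ^ llen w.toList) = M at *
  generalize (∑' w : TT P false, (X : ℚ⟦X⟧) ^ llen w.1.toList) = Q0 at *
  generalize (∑' w : TT P true, (X : ℚ⟦X⟧) ^ llen w.1.toList) = Q1 at *
  generalize (∑' w : TT P false, (lhalf w.1.toList : ℚ⟦X⟧) * X ^ llen w.1.toList) = M0 at *
  generalize (∑' w : TT P true, (lhalf w.1.toList : ℚ⟦X⟧) * X ^ llen w.1.toList) = M1 at *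
  generalize cS P false = C0 at *
  generalize cS P true = C1 at *
  generalize mS P false = n0 at *
  generalize mS P true = n1 at *
  obtain ⟨D, hD⟩ : ∃ D, D = C0 + C1 - C0 * C1 := ⟨_, rfl⟩
  rw [← hD]
  have hQ0 : Q0 * D = C1 := by
    rw [hD]; linear_combination f1 - (1 - C1) * f0 - C1 * s1
  have hQ1 : Q1 * D = C0 := by
    rw [hD]; linear_combination f0 - (1 - C0) * f1 - C0 * s1
  have hF : F * D = C0 * C1 := by
    linear_combination D * f0 + C0 * hQ0
  have hM : M * D = C1 * n0 * Q0 + C0 * n1 * Q1 := by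
    rw [hD]; linear_combination C1 * m0 + C0 * m1 - C0 * C1 * s2
  linear_combination D ^ 2 * hAe + (1 + X) * D * hF + (1 - X) * D * hM + (1 - X) * C1 * n0 * hQ0
    + (1 - X) * C0 * n1 * hQ1

end TorusGrowth

namespace TorusGrowth

open Monoid PowerSeries
open scoped PowerSeries.WithPiTopology

lemma sumZ {R : Type*} [AddCommMonoid R] (p : ℕ) [NeZero p] (f : ℕ → R) :
    ∑ h : ZMod p, f h.valMinAbs.natAbs = ∑ j ∈ Finset.range p, f (min j (p - j)) := by
  rw [Finset.sum_range]
  simp only [ZMod.valMinAbs_natAbs_eq_min]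
  cases p with
  | zero => exact absurd rfl (NeZero.ne 0)
  | succ n => rfl

lemma cS_eq (P : Bool → ℕ) [∀ i, NeZero (P i)] (i : Bool) : cS P i = (Cpol (P i) : ℚ⟦X⟧) := by
  have h1 : cS P i = ∑ h : ZMod (P i), (X : ℚ⟦X⟧) ^ h.valMinAbs.natAbs :=
    Fintype.sum_equiv Multiplicative.toAdd _ _ (fun _ => rfl)
  rw [h1, sumZ (P i) (fun j => (X : ℚ⟦X⟧) ^ j)]
  have hp : P i ≠ 0 := NeZero.ne _
  generalize P i = p at hp
  have hI : ∀ m : ℕ, ∑ k ∈ Finset.Ioo 0 (m + 1), (2 : ℚ⟦X⟧) * X ^ k =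
      2 * ∑ j ∈ Finset.range m, X ^ (j + 1) := by
    intro m
    have : Finset.Ioo 0 (m + 1) = Finset.Ico 1 (m + 1) := by ext; simp; omega
    rw [this, Finset.sum_Ico_eq_sum_range, Finset.mul_sum]
    simp [add_comm]
  have hC : (Cpol p : ℚ⟦X⟧) = 1 + ∑ k ∈ Finset.Ioo 0 ((p + 1) / 2), 2 * X ^ k +
      (if p % 2 = 0 then X ^ (p / 2) else 0) := by
    have := map_sum (Polynomial.coeToPowerSeries.ringHom (R := ℚ))
      (fun k => 2 * Polynomial.X ^ k) (Finset.Ioo 0 ((p + 1) / 2))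
    simp only [Polynomial.coeToPowerSeries.ringHom_apply, Polynomial.coe_mul, Polynomial.coe_pow,
      Polynomial.coe_X] at this
    have h2 : ((2 : Polynomial ℚ) : ℚ⟦X⟧) = 2 :=
      map_ofNat (Polynomial.coeToPowerSeries.ringHom (R := ℚ)) 2
    rw [h2] at this
    rw [Cpol, Polynomial.coe_add, Polynomial.coe_add, Polynomial.coe_one, this]
    split_ifs <;> simp
  rw [hC]
  have hrefl : ∀ m : ℕ, ∑ j ∈ Finset.range m, (X : ℚ⟦X⟧) ^ (m - j) =
      ∑ j ∈ Finset.range m, X ^ (j + 1) := by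
    intro m
    rw [← Finset.sum_range_reflect]
    refine Finset.sum_congr rfl fun j hj => ?_
    rw [Finset.mem_range] at hj
    congr 1; omega
  rcases Nat.even_or_odd' p with ⟨m, rfl | rfl⟩
  · obtain ⟨n, rfl⟩ : ∃ n, m = n + 1 := ⟨m - 1, by omega⟩
    rw [if_pos (by omega), show (2 * (n + 1) + 1) / 2 = n + 1 by omega,
      show 2 * (n + 1) / 2 = n + 1 by omega, hI, two_mul (n + 1), Finset.sum_range_add]
    have e1 : ∑ x ∈ Finset.range (n + 1), (X : ℚ⟦X⟧) ^ min x (n + 1 + (n + 1) - x) =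
        ∑ x ∈ Finset.range (n + 1), X ^ x := by
      refine Finset.sum_congr rfl fun j hj => ?_
      rw [Finset.mem_range] at hj
      congr 1; omega
    have e2 : ∑ x ∈ Finset.range (n + 1), (X : ℚ⟦X⟧) ^
          min (n + 1 + x) (n + 1 + (n + 1) - (n + 1 + x)) =
        ∑ x ∈ Finset.range (n + 1), X ^ (n + 1 - x) := by
      refine Finset.sum_congr rfl fun j hj => ?_
      rw [Finset.mem_range] at hj
      congr 1; omega
    rw [e1, e2, hrefl, Finset.sum_range_succ', Finset.sum_range_succ]
    ring
  · rw [if_neg (by omega), show (2 * m + 1 + 1) / 2 = m + 1 by omega,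
      hI, show 2 * m + 1 = (m + 1) + m by omega, Finset.sum_range_add]
    have e1 : ∑ x ∈ Finset.range (m + 1), (X : ℚ⟦X⟧) ^ min x (m + 1 + m - x) =
        ∑ x ∈ Finset.range (m + 1), X ^ x := by
      refine Finset.sum_congr rfl fun j hj => ?_
      rw [Finset.mem_range] at hj
      congr 1; omega
    have e2 : ∑ x ∈ Finset.range m, (X : ℚ⟦X⟧) ^
          min (m + 1 + x) (m + 1 + m - (m + 1 + x)) =
        ∑ x ∈ Finset.range m, X ^ (m - x) := by
      refine Finset.sum_congr rfl fun j hj => ?_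
      rw [Finset.mem_range] at hj
      congr 1; omega
    rw [e1, e2, hrefl, Finset.sum_range_succ']
    ring

lemma mS_eq (P : Bool → ℕ) [∀ i, NeZero (P i)] (i : Bool) : mS P i = mser (P i) := by
  have h1 : mS P i = ∑ h : ZMod (P i), if 2 * h.valMinAbs = (P i : ℤ) then
      (X : ℚ⟦X⟧) ^ h.valMinAbs.natAbs else 0 := by
    refine Fintype.sum_equiv Multiplicative.toAdd _ _ (fun h => ?_)
    by_cases h2 : 2 * (Multiplicative.toAdd h).valMinAbs = (P i : ℤ)
    · have h3 : hf (P := P) (i := i) h = 1 := if_pos h2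
      rw [h3, if_pos h2, Nat.cast_one, one_mul]
      rfl
    · have h3 : hf (P := P) (i := i) h = 0 := if_neg h2
      rw [h3, if_neg h2, Nat.cast_zero, zero_mul]
  rw [h1, mser]
  have hp : P i ≠ 0 := NeZero.ne _
  split_ifs with h
  · have key : ∀ a : ZMod (P i), 2 * a.valMinAbs = (P i : ℤ) ↔ a = (((P i / 2 : ℕ) : ℤ) : ZMod (P i)) := by
      intro a
      have := ZMod.valMinAbs_spec a ((P i / 2 : ℕ) : ℤ)
      constructor
      · intro h2
        exact (this.1 (by omega)).1
      · intro h2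
        have := this.2 ⟨h2, by constructor <;> omega⟩
        omega
    rw [Finset.sum_eq_single (((P i / 2 : ℕ) : ℤ) : ZMod (P i))]
    · have h3 := (key _).2 rfl
      rw [if_pos h3]
      congr 1; omega
    · intro b _ hb
      rw [if_neg]
      rwa [key]
    · simp
  · apply Finset.sum_eq_zero
    intro a _
    rw [if_neg]
    omega

end TorusGrowth

open TorusGrowth
open scoped PowerSeries.WithPiTopology

/-- Main theorem: for any `p, q > 1`, the growth series `A` of `T'_{p,q}` with
respect to `{x, y, z}` satisfies
`A = C_∞ C_p C_q / (C_p+C_q-C_p C_q) + (m_q C_p² + m_p C_q²)/(C_p+C_q-C_p C_q)²`,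
stated multiplied out by `(1-t)(C_p+C_q-C_p C_q)²`. -/
theorem stmt_11 (p q : ℕ) (hp : 1 < p) (hq : 1 < q) :
    (1 - PowerSeries.X) *
        ((Cpol p : PowerSeries ℚ) + (Cpol q : PowerSeries ℚ) -
          (Cpol p : PowerSeries ℚ) * (Cpol q : PowerSeries ℚ)) ^ 2 *
        growthSeries ({PresentedGroup.of 0, PresentedGroup.of 1, PresentedGroup.of 2} :
          Set (PresentedGroup (torusRels p q))) =
      (1 + PowerSeries.X) * (Cpol p : PowerSeries ℚ) * (Cpol q : PowerSeries ℚ) *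
          ((Cpol p : PowerSeries ℚ) + (Cpol q : PowerSeries ℚ) -
            (Cpol p : PowerSeries ℚ) * (Cpol q : PowerSeries ℚ)) +
        (1 - PowerSeries.X) *
          (mser q * (Cpol p : PowerSeries ℚ) ^ 2 +
            mser p * (Cpol q : PowerSeries ℚ) ^ 2) := by
  classical
  let P : Bool → ℕ := fun b => cond b q p
  have hP : ∀ i, 1 < P i := by intro i; cases i <;> assumption
  have hNZ : ∀ i, NeZero (P i) := fun i => ⟨by have := hP i; omega⟩
  let gx : Bool → PresentedGroup (torusRels p q) :=
    fun b => cond b (PresentedGroup.of 1) (PresentedGroup.of 0)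
  let z : PresentedGroup (torusRels p q) := PresentedGroup.of 2
  have hz : ∀ i, gx i ^ P i = z := by
    have r0 : PresentedGroup.mk (torusRels p q) (FreeGroup.of 0 ^ p * (FreeGroup.of 2)⁻¹) = 1 :=
      PresentedGroup.one_of_mem (by simp [torusRels])
    have r1 : PresentedGroup.mk (torusRels p q) (FreeGroup.of 1 ^ q * (FreeGroup.of 2)⁻¹) = 1 :=
      PresentedGroup.one_of_mem (by simp [torusRels])
    rw [map_mul, map_inv, map_pow, mul_inv_eq_one] at r0 r1
    intro i
    cases i
    · exact r0
    · exact r1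
  set S : Set (PresentedGroup (torusRels p q)) :=
    {PresentedGroup.of 0, PresentedGroup.of 1, PresentedGroup.of 2} with hSdef
  have hS : ∀ g ∈ S, (∃ i, g = gx i) ∨ g = z := by
    rintro g (rfl | rfl | rfl)
    · exact Or.inl ⟨false, rfl⟩
    · exact Or.inl ⟨true, rfl⟩
    · exact Or.inr rfl
  have hS' : ∀ i, gx i ∈ S := by
    intro i; cases i <;> simp [hSdef, gx]
  have hzS : z ∈ S := by simp [hSdef, z]
  have hfinS : S.Finite := Set.toFinite _
  let fφ : Fin 3 → Monoid.CoprodI (TM P) :=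
    ![Monoid.CoprodI.of (M := TM P) (i := false) (Multiplicative.ofAdd (1 : ZMod (P false))),
      Monoid.CoprodI.of (M := TM P) (i := true) (Multiplicative.ofAdd (1 : ZMod (P true))), 1]
  have hpow : ∀ i, (Monoid.CoprodI.of (M := TM P) (i := i)
      (Multiplicative.ofAdd (1 : ZMod (P i)))) ^ P i = 1 := by
    intro i
    rw [← map_pow, ← ofAdd_nsmul]
    simp
  have hφr : ∀ r ∈ torusRels p q, FreeGroup.lift fφ r = 1 := by
    rintro r (rfl | rfl)
    · have h := hpow false
      simp only [fφ, map_mul, map_pow, map_inv, FreeGroup.lift_apply_of, mul_inv_eq_one]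
      exact h
    · have h := hpow true
      simp only [fφ, map_mul, map_pow, map_inv, FreeGroup.lift_apply_of, mul_inv_eq_one]
      exact h
  let fψ : Fin 3 → Multiplicative ℤ :=
    ![Multiplicative.ofAdd (q : ℤ), Multiplicative.ofAdd (p : ℤ), Multiplicative.ofAdd ((p * q : ℕ) : ℤ)]
  have hψr : ∀ r ∈ torusRels p q, FreeGroup.lift fψ r = 1 := by
    rintro r (rfl | rfl)
    · simp only [fψ, map_mul, map_pow, map_inv, FreeGroup.lift_apply_of, mul_inv_eq_one]
      change Multiplicative.ofAdd (q : ℤ) ^ p = Multiplicative.ofAdd ((p * q : ℕ) : ℤ)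
      rw [← ofAdd_nsmul]
      simp
    · simp only [fψ, map_mul, map_pow, map_inv, FreeGroup.lift_apply_of, mul_inv_eq_one]
      change Multiplicative.ofAdd (p : ℤ) ^ q = Multiplicative.ofAdd ((p * q : ℕ) : ℤ)
      rw [← ofAdd_nsmul]
      congr 1
      simp [mul_comm]
  have hinj : Function.Injective (sec gx z : TW P × ℤ → _) := by
    refine sec_inj (PresentedGroup.toGroup hφr) ?_ ?_ (PresentedGroup.toGroup hψr) ?_
    · intro i
      cases i
      · exact PresentedGroup.toGroup.of hφr
      · exact PresentedGroup.toGroup.of hφr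
    · exact PresentedGroup.toGroup.of hφr
    · have : PresentedGroup.toGroup hψr z = Multiplicative.ofAdd ((p * q : ℕ) : ℤ) :=
        PresentedGroup.toGroup.of hψr
      rw [this, ne_eq, ofAdd_eq_one]
      have : p * q ≠ 0 := by positivity
      exact_mod_cast this
  have hsurj : Function.Surjective (sec gx z : TW P × ℤ → _) := by
    intro g
    have hcl : Subgroup.closure S = ⊤ := by
      rw [← PresentedGroup.closure_range_of]
      congr 1
      ext g
      simp only [hSdef, Set.mem_insert_iff, Set.mem_singleton_iff, Set.mem_range]
      constructor
      · rintro (rfl | rfl | rfl) <;> exact ⟨_, rfl⟩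
      · rintro ⟨i, rfl⟩
        fin_cases i <;> simp
    have hg : g ∈ Subgroup.closure S := hcl ▸ Subgroup.mem_top g
    rw [← Subgroup.mem_toSubmonoid, Subgroup.closure_toSubmonoid] at hg
    obtain ⟨l, h1, h2⟩ := Submonoid.exists_list_of_mem_closure hg
    obtain ⟨st, h3, -⟩ := lower hz hP hS l.length g ⟨l, rfl, h1, h2⟩
    exact ⟨st, h3⟩
  have hfin := sL_finite hz hfinS hS' hzS hinj
  have hlen := wordLength_sec hz hP hS hS' hzS hinj
  have hA : HasSum (fun st : TW P × ℤ => (PowerSeries.X : PowerSeries ℚ) ^ sL st)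
      (growthSeries S) := by
    rw [PowerSeries.WithPiTopology.hasSum_iff_hasSum_coeff]
    intro n
    have hc : PowerSeries.coeff n (growthSeries S) =
        ∑ st ∈ (hfin n).toFinset, PowerSeries.coeff n ((PowerSeries.X : PowerSeries ℚ) ^ sL st) := by
      rw [growthSeries, PowerSeries.coeff_mk]
      have e1 : {g | wordLength S g = n} = sec gx z '' {st : TW P × ℤ | sL st = n} := by
        ext g
        constructor
        · intro hg
          obtain ⟨st, rfl⟩ := hsurj g
          exact ⟨st, (hlen st).symm.trans hg, rfl⟩
        · rintro ⟨st, h, rfl⟩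
          exact (hlen st).trans h
      rw [e1, Set.ncard_image_of_injective _ hinj, Set.ncard_eq_toFinset_card _ (hfin n)]
      rw [Finset.sum_congr rfl (g := fun _ => (1 : ℚ))]
      · simp
      · intro st hst
        have : sL st = n := by simpa using hst
        rw [this, PowerSeries.coeff_X_pow, if_pos rfl]
    rw [hc]
    apply hasSum_sum_of_ne_finset_zero
    intro st hst
    have : sL st ≠ n := by simpa using hst
    rw [PowerSeries.coeff_X_pow, if_neg (fun h => this h.symm)]
  have := main_alg hP hfin _ hA
  rw [cS_eq, cS_eq, mS_eq, mS_eq] at this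
  exact this
end
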